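/- The MoESP algorithm is incomplete for 3 seed sets on non-2-piecewise-simple results: on the graph with nodes A,1,x,2,B,3,C and edges A–1, 1–x, x–2, 2–B, x–3, 3–C, with seed sets S_1={A}, S_2={B}, S_3={C}, the only CTP result is the 3-simple tree consisting of all six edges, and there exists an execution order of MoESP under which this result is not found. -/

import Mathlib

/-!
Write `0 = A`, `2 = x`, `4 = B`, `6 = C`; the three arms `0–1–2`, `4–3–2`, `6–5–2` meet at the
centre `2`.

*The only result.* The edges at `0`, `4`, `6` are forced since these seeds must be covered, and
omitting the inner edge of an arm cuts that arm's seed from the rest (`not_connected_of_cut`). The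
same cut argument shows that the full tree is minimal.

*The incomplete run.* The leaves of a built tree are seeds, except possibly its root, so
the centre can only acquire a third edge in a tree rooted at `2` that already consists of two whole
arms. In the run below (`provAt`), the paths from each
seed are grown past the centre into the other two arms, and the seed-to-seed path `A–B` is first
obtained by a merge at node `3`, the paths `A–C` and `B–C` by a merge at node `5`. These three trees
cannot grow, and edge-set pruning discards every later version of them, notably those
rooted at the centre. Their re-rootings at the two seeds cannot grow by definition, and cannot merge,
because any other tree rooted at a seed contains that seed.

Validity of provenances on this graph is decided by the Boolean procedure `validB`
(`validB_iff`), so that the closure conditions on the run reduce to finite computations.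
-/

/-! Framework for formalizing connecting-tree-pattern (CTP) search algorithms
(GAM, ESP, LESP, MoESP, MoLESP) over undirected multigraphs. -/

/-- An undirected multigraph: each edge has an unordered pair of endpoints. -/
structure Multigraph (V : Type*) (E : Type*) where
  ends : E → Sym2 V

namespace CTP

variable {V : Type*} {E : Type*}

/-- `v` is a seed: it belongs to some seed set. -/
def isSeed {m : ℕ} (S : Fin m → Set V) (v : V) : Prop := ∃ i, v ∈ S i

/-- The set of nodes touched by an edge set. -/
def nodeSet (G : Multigraph V E) (T : Finset E) : Set V := {v | ∃ e ∈ T, v ∈ G.ends e}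

/-- The number of edges of `T` adjacent to `v`. -/
noncomputable def deg (G : Multigraph V E) (v : V) (T : Finset E) : ℕ :=
  Set.ncard {e | e ∈ T ∧ v ∈ G.ends e}

/-- `v` is a leaf of the edge set `T`: it is adjacent to exactly one edge of `T`. -/
def IsLeaf (G : Multigraph V E) (T : Finset E) (v : V) : Prop := deg G v T = 1

/-- `v` has at least three adjacent edges in `G`. -/
def HasDegThree (G : Multigraph V E) (v : V) : Prop :=
  ∃ e₁ e₂ e₃ : E, e₁ ≠ e₂ ∧ e₁ ≠ e₃ ∧ e₂ ≠ e₃ ∧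
    v ∈ G.ends e₁ ∧ v ∈ G.ends e₂ ∧ v ∈ G.ends e₃

/-- All nodes touched by `T` are pairwise connected by edges of `T`
(edges are traversed in either direction). -/
def connectedEdges (G : Multigraph V E) (T : Finset E) : Prop :=
  ∀ x ∈ nodeSet G T, ∀ y ∈ nodeSet G T,
    Relation.ReflTransGen (fun a b => ∃ e ∈ T, G.ends e = s(a, b)) x y

/-- The edge set `T` forms a tree (connected and acyclic). -/
def IsTreeEdges (G : Multigraph V E) (T : Finset E) : Prop :=
  connectedEdges G T ∧ (T.Nonempty → (nodeSet G T).ncard = T.card + 1)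

/-- Nodes of a rooted edge set: just the root, if there are no edges. -/
def nodesIn (G : Multigraph V E) (T : Finset E) (r : V) : Set V :=
  {v | (T = ∅ ∧ v = r) ∨ v ∈ nodeSet G T}

/-- sat: the indices of the seed sets having a seed in the rooted edge set. -/
def satIn {m : ℕ} (G : Multigraph V E) (S : Fin m → Set V) (T : Finset E) (r : V) :
    Set (Fin m) := {i | ∃ v ∈ nodesIn G T r, v ∈ S i}

/-- A rooted tree: a set of edges plus a distinguished root node. -/
structure RTree (V : Type*) (E : Type*) where
  edges : Finset E
  root : V

/-- Nodes of a rooted tree. -/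
def RTree.nodes (G : Multigraph V E) (t : RTree V E) : Set V := nodesIn G t.edges t.root

/-- The rooted tree is well-formed in `G`. -/
def RTree.Valid (G : Multigraph V E) (t : RTree V E) : Prop :=
  IsTreeEdges G t.edges ∧ (t.edges.Nonempty → t.root ∈ nodeSet G t.edges)

/-- A CTP result: a minimal subtree of `G` containing a node from each seed set:
(i) it contains exactly one node from each `S i`, and (ii) removing any edge
disconnects it or removes some seed. -/
def IsCTPResult {m : ℕ} [DecidableEq E] (G : Multigraph V E) (S : Fin m → Set V)
    (t : RTree V E) : Prop :=
  t.Valid G ∧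
  (∀ i, ∃! v, v ∈ t.nodes G ∧ v ∈ S i) ∧
  (∀ e ∈ t.edges, ¬ connectedEdges G (t.edges.erase e) ∨
    ∃ i, ∃ v ∈ S i, v ∈ t.nodes G ∧ v ∉ nodeSet G (t.edges.erase e))

/-- The edge set `T` forms a path: a tree in which every node has degree at most 2. -/
def IsPathEdges (G : Multigraph V E) (T : Finset E) : Prop :=
  IsTreeEdges G T ∧ ∀ v ∈ nodeSet G T, deg G v T ≤ 2

/-- An `(n,s)`-rooted path: a rooted path from a seed `s` to a root node `n`,
whose only seed is `s`. -/
def IsNSPath {m : ℕ} (G : Multigraph V E) (S : Fin m → Set V) (T : Finset E)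
    (n s : V) : Prop :=
  IsPathEdges G T ∧ isSeed S s ∧
  ((T = ∅ ∧ n = s) ∨
    (T ≠ ∅ ∧ s ≠ n ∧ s ∈ nodeSet G T ∧ n ∈ nodeSet G T ∧ IsLeaf G T s ∧ IsLeaf G T n)) ∧
  (∀ v ∈ nodesIn G T n, isSeed S v → v = s)

/-- A simple edge set: a tree whose leaves are exactly its seed nodes
(all leaves are seeds, all internal nodes are non-seeds). -/
def IsSimpleEdgeSet {m : ℕ} (G : Multigraph V E) (S : Fin m → Set V) (T : Finset E) : Prop :=
  IsTreeEdges G T ∧ ∀ v ∈ nodeSet G T, (IsLeaf G T v ↔ isSeed S v)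

/-- The number of leaves of an edge set. -/
noncomputable def leafCount (G : Multigraph V E) (T : Finset E) : ℕ :=
  Set.ncard {v ∈ nodeSet G T | IsLeaf G T v}

/-- A `p`-simple edge set: a simple edge set with at most `p` leaves. -/
def pSimple {m : ℕ} (G : Multigraph V E) (S : Fin m → Set V) (T : Finset E) (p : ℕ) : Prop :=
  IsSimpleEdgeSet G S T ∧ leafCount G T ≤ p

/-- A simple tree decomposition of the edge set `T`: a set of nonempty simple
edge sets partitioning the edges of `T` (they may share leaf nodes). -/
def IsSimpleDecomp {m : ℕ} (G : Multigraph V E) (S : Fin m → Set V) (T : Finset E)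
    (θ : Set (Finset E)) : Prop :=
  (∀ P ∈ θ, P.Nonempty ∧ IsSimpleEdgeSet G S P ∧ P ⊆ T) ∧
  (∀ e ∈ T, ∃! P, P ∈ θ ∧ e ∈ P)

/-- `T` is `p`-piecewise simple: its simple tree decomposition exists and
consists of `p`-simple edge sets. -/
def IsPPS {m : ℕ} (G : Multigraph V E) (S : Fin m → Set V) (T : Finset E) (p : ℕ) : Prop :=
  ∃ θ, IsSimpleDecomp G S T θ ∧ ∀ P ∈ θ, leafCount G P ≤ p

/-- A `(u,n)` rooted merge: the rooted tree obtained by merging `u`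
`(n,sⱼ)`-rooted paths at the non-seed node `n`; the paths share no node but `n`,
and their seeds come from pairwise distinct seed sets. -/
def IsURootedMerge {m : ℕ} [DecidableEq E] (G : Multigraph V E) (S : Fin m → Set V)
    (u : ℕ) (T : Finset E) (n : V) : Prop :=
  ¬ isSeed S n ∧
  ∃ (P : Fin u → Finset E) (s : Fin u → V),
    (∀ j, IsNSPath G S (P j) n (s j)) ∧
    (∀ j k, j ≠ k → nodesIn G (P j) n ∩ nodesIn G (P k) n ⊆ {n}) ∧
    (∀ j k, j ≠ k → ∀ i, ¬ (s j ∈ S i ∧ s k ∈ S i)) ∧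
    T = Finset.univ.biUnion P

/-- Provenances: the ways the algorithms build rooted trees.
`grow t e x` grows `t` from its root along edge `e` to the new root `x`;
`merge t₁ t₂` merges two trees with the same root; `mo t r` re-roots `t`
at the seed node `r` (MoESP trees). -/
inductive Prov (V : Type*) (E : Type*) : Type _ where
  | init : V → Prov V E
  | grow : Prov V E → E → V → Prov V E
  | merge : Prov V E → Prov V E → Prov V E
  | mo : Prov V E → V → Prov V E

namespace Prov

/-- The root of (the rooted tree of) a provenance. -/
def root : Prov V E → V
  | init x => x
  | grow _ _ x => x
  | merge t₁ _ => t₁.root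
  | mo _ r => r

/-- The edge set of a provenance. -/
def edges [DecidableEq E] : Prov V E → Finset E
  | init _ => ∅
  | grow t e _ => insert e (edges t)
  | merge t₁ t₂ => edges t₁ ∪ edges t₂
  | mo t _ => edges t

/-- The node set of a provenance. -/
def nodes (G : Multigraph V E) : Prov V E → Set V
  | init x => {x}
  | grow t _ x => insert x (nodes G t)
  | merge t₁ t₂ => nodes G t₁ ∪ nodes G t₂
  | mo t _ => nodes G t

/-- The provenance contains an `mo` (MoESP re-rooting) step. -/
def hasMo : Prov V E → Prop
  | init _ => False
  | grow t _ _ => hasMo t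
  | merge t₁ t₂ => hasMo t₁ ∨ hasMo t₂
  | mo _ _ => True

/-- The top operation of the provenance is `mo`. -/
def isMoTop : Prov V E → Prop
  | mo _ _ => True
  | _ => False

/-- The top operation of the provenance is `merge` (a "Merge tree"). -/
def isMergeTop : Prov V E → Prop
  | merge _ _ => True
  | _ => False

/-- The immediate sub-provenances. -/
def children : Prov V E → List (Prov V E)
  | init _ => []
  | grow t _ _ => [t]
  | merge t₁ t₂ => [t₁, t₂]
  | mo t _ => [t]

end Prov

/-- sat of a provenance: the seed sets having a seed among its nodes. -/
def satP {m : ℕ} (G : Multigraph V E) (S : Fin m → Set V) (t : Prov V E) : Set (Fin m) :=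
  {i | ∃ v ∈ t.nodes G, v ∈ S i}

/-- The provenance (a grow or merge) has strictly more seeds than any of its children. -/
def SeedGain {m : ℕ} (G : Multigraph V E) (S : Fin m → Set V) : Prov V E → Prop
  | .init _ => False
  | .grow t e x => (satP G S t).ncard < (satP G S (.grow t e x)).ncard
  | .merge t₁ t₂ => (satP G S t₁).ncard < (satP G S (.merge t₁ t₂)).ncard ∧
      (satP G S t₂).ncard < (satP G S (.merge t₁ t₂)).ncard
  | .mo _ _ => False

/-- Validity of a provenance w.r.t. graph `G` and seed sets `S`:
* `init x` for a seed `x`;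
* `grow t e x`: `e` goes from `t`'s root to `x`, `x` is not in `t`, `x` is not a
  seed from a set in sat(`t`), `t` is not a result yet, and Grow is disabled on
  MoESP trees;
* `merge t₁ t₂`: same root, no other common node, disjoint sats;
* `mo t r`: re-rooting at a seed node `r` ≠ root, when `t` gained seeds. -/
inductive ValidProv {m : ℕ} (G : Multigraph V E) (S : Fin m → Set V) : Prov V E → Prop where
  | init {x : V} {i : Fin m} (h : x ∈ S i) : ValidProv G S (.init x)
  | grow {t : Prov V E} {e : E} {x : V} (ht : ValidProv G S t)
      (he : G.ends e = s(t.root, x)) (hx : x ∉ t.nodes G)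
      (hs : ¬ ∃ i ∈ satP G S t, x ∈ S i)
      (hnotfull : ¬ ∀ i : Fin m, i ∈ satP G S t)
      (hmo : ¬ t.hasMo) : ValidProv G S (.grow t e x)
  | merge {t₁ t₂ : Prov V E} (h₁ : ValidProv G S t₁) (h₂ : ValidProv G S t₂)
      (hr : t₁.root = t₂.root) (hn : t₁.nodes G ∩ t₂.nodes G ⊆ {t₁.root})
      (hs : satP G S t₁ ∩ satP G S t₂ = ∅) : ValidProv G S (.merge t₁ t₂)
  | mo {t : Prov V E} {r : V} (ht : ValidProv G S t) (hr : r ∈ t.nodes G)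
      (hseed : isSeed S r) (hne : r ≠ t.root) (hgain : SeedGain G S t) :
      ValidProv G S (.mo t r)

/-- The common part of an execution of the algorithms: the set `built` of all
provenances built (and kept) during the run, together with their build times.
Children of built trees were built earlier, `Init` trees are built for all
seeds, and build times are distinct. -/
structure PreRun {m : ℕ} (G : Multigraph V E) (S : Fin m → Set V) where
  built : Set (Prov V E)
  time : Prov V E → ℕ
  hvalid : ∀ t ∈ built, ValidProv G S t
  hchild : ∀ t ∈ built, ∀ c ∈ t.children, c ∈ built ∧ time c < time t
  htime : ∀ t₁ ∈ built, ∀ t₂ ∈ built, time t₁ = time t₂ → t₁ = t₂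
  hinit : ∀ x : V, isSeed S x → Prov.init x ∈ built

/-- Seed signature of node `n` at time `τ`: the seed sets `S i` such that an
`(n,sᵢ)`-rooted path from a seed `sᵢ ∈ S i` has been built before `τ`. -/
def ssAt {m : ℕ} [DecidableEq E] {G : Multigraph V E} {S : Fin m → Set V}
    (R : PreRun G S) (τ : ℕ) (n : V) : Set (Fin m) :=
  {i | ∃ p ∈ R.built, R.time p < τ ∧ p.root = n ∧
    ∃ s ∈ S i, IsNSPath G S (Prov.edges p) n s}

/-- An execution of GAM, given unbounded time: no MoESP trees; at most one
provenance per rooted tree (edge set plus root) is kept; and fairness: every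
valid Grow/Merge opportunity from built trees leads to a built provenance with
the produced rooted tree. -/
structure GAMRun {m : ℕ} [DecidableEq E] (G : Multigraph V E) (S : Fin m → Set V)
    extends PreRun G S where
  hnomo : ∀ t ∈ built, ¬ t.hasMo
  hdedup : ∀ t₁ ∈ built, ∀ t₂ ∈ built,
    Prov.edges t₁ = Prov.edges t₂ → t₁.root = t₂.root → t₁ = t₂
  hgrow : ∀ t ∈ built, ∀ e x, ValidProv G S (.grow t e x) →
    ∃ t' ∈ built, Prov.edges t' = insert e (Prov.edges t) ∧ t'.root = x
  hmerge : ∀ t₁ ∈ built, ∀ t₂ ∈ built, ValidProv G S (.merge t₁ t₂) →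
    ∃ t' ∈ built, Prov.edges t' = Prov.edges t₁ ∪ Prov.edges t₂ ∧ t'.root = t₁.root

/-- An execution of ESP (GAM with edge-set pruning): at most one provenance per
nonempty edge set is kept; fairness only guarantees some built provenance with
the produced edge set (possibly rooted elsewhere). -/
structure ESPRun {m : ℕ} [DecidableEq E] (G : Multigraph V E) (S : Fin m → Set V)
    extends PreRun G S where
  hnomo : ∀ t ∈ built, ¬ t.hasMo
  hdedup : ∀ t₁ ∈ built, ∀ t₂ ∈ built,
    Prov.edges t₁ = Prov.edges t₂ → (Prov.edges t₁).Nonempty → t₁ = t₂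
  hgrow : ∀ t ∈ built, ∀ e x, ValidProv G S (.grow t e x) →
    ∃ t' ∈ built, Prov.edges t' = insert e (Prov.edges t)
  hmerge : ∀ t₁ ∈ built, ∀ t₂ ∈ built, ValidProv G S (.merge t₁ t₂) →
    ∃ t' ∈ built, Prov.edges t' = Prov.edges t₁ ∪ Prov.edges t₂

/-- An execution of LESP (ESP with limited edge-set pruning): a duplicate
(same nonempty edge set) is kept only if it is a Merge tree rooted at a node
whose seed signature has at least 3 bits set and that has at least 3 adjacent
edges in `G`; conversely, a Merge opportunity whose root satisfies the
exemption condition at the time it is attempted is never pruned. -/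
structure LESPRun {m : ℕ} [DecidableEq E] (G : Multigraph V E) (S : Fin m → Set V)
    extends PreRun G S where
  hnomo : ∀ t ∈ built, ¬ t.hasMo
  hdedup : ∀ t₁ ∈ built, ∀ t₂ ∈ built,
    Prov.edges t₁ = Prov.edges t₂ → (Prov.edges t₁).Nonempty → time t₁ < time t₂ →
    t₂.isMergeTop ∧ 3 ≤ (ssAt toPreRun (time t₂) t₂.root).ncard ∧ HasDegThree G t₂.root
  hgrow : ∀ t ∈ built, ∀ e x, ValidProv G S (.grow t e x) →
    ∃ t' ∈ built, Prov.edges t' = insert e (Prov.edges t)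
  hmerge : ∀ t₁ ∈ built, ∀ t₂ ∈ built, ValidProv G S (.merge t₁ t₂) →
    ∃ t' ∈ built, Prov.edges t' = Prov.edges t₁ ∪ Prov.edges t₂
  hmergeExempt : ∀ t₁ ∈ built, ∀ t₂ ∈ built, ValidProv G S (.merge t₁ t₂) →
    3 ≤ (ssAt toPreRun (max (time t₁) (time t₂) + 1) t₁.root).ncard →
    HasDegThree G t₁.root → Prov.merge t₁ t₂ ∈ built

/-- An execution of MoESP (ESP plus MoESP re-rooted trees): edge-set pruning
applies only to non-`mo` trees; every valid MoESP re-rooting of a built tree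
is built. -/
structure MoESPRun {m : ℕ} [DecidableEq E] (G : Multigraph V E) (S : Fin m → Set V)
    extends PreRun G S where
  hdedup : ∀ t₁ ∈ built, ∀ t₂ ∈ built, ¬ t₁.isMoTop → ¬ t₂.isMoTop →
    Prov.edges t₁ = Prov.edges t₂ → (Prov.edges t₁).Nonempty → t₁ = t₂
  hgrow : ∀ t ∈ built, ∀ e x, ValidProv G S (.grow t e x) →
    ∃ t' ∈ built, Prov.edges t' = insert e (Prov.edges t)
  hmerge : ∀ t₁ ∈ built, ∀ t₂ ∈ built, ValidProv G S (.merge t₁ t₂) →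
    ∃ t' ∈ built, Prov.edges t' = Prov.edges t₁ ∪ Prov.edges t₂
  hmo : ∀ t ∈ built, ∀ r, ValidProv G S (.mo t r) → Prov.mo t r ∈ built

/-- An execution of MoLESP: ESP with both the MoESP and the LESP modifications. -/
structure MoLESPRun {m : ℕ} [DecidableEq E] (G : Multigraph V E) (S : Fin m → Set V)
    extends PreRun G S where
  hdedup : ∀ t₁ ∈ built, ∀ t₂ ∈ built, ¬ t₁.isMoTop → ¬ t₂.isMoTop →
    Prov.edges t₁ = Prov.edges t₂ → (Prov.edges t₁).Nonempty → time t₁ < time t₂ →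
    t₂.isMergeTop ∧ 3 ≤ (ssAt toPreRun (time t₂) t₂.root).ncard ∧ HasDegThree G t₂.root
  hgrow : ∀ t ∈ built, ∀ e x, ValidProv G S (.grow t e x) →
    ∃ t' ∈ built, Prov.edges t' = insert e (Prov.edges t)
  hmerge : ∀ t₁ ∈ built, ∀ t₂ ∈ built, ValidProv G S (.merge t₁ t₂) →
    ∃ t' ∈ built, Prov.edges t' = Prov.edges t₁ ∪ Prov.edges t₂
  hmergeExempt : ∀ t₁ ∈ built, ∀ t₂ ∈ built, ValidProv G S (.merge t₁ t₂) →
    3 ≤ (ssAt toPreRun (max (time t₁) (time t₂) + 1) t₁.root).ncard →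
    HasDegThree G t₁.root → Prov.merge t₁ t₂ ∈ built
  hmo : ∀ t ∈ built, ∀ r, ValidProv G S (.mo t r) → Prov.mo t r ∈ built

/-- The run (with built set `B`) finds the (unrooted) tree of `t`: some built
provenance has exactly its edge set (and its root, in the degenerate one-node case). -/
def Finds [DecidableEq E] (B : Set (Prov V E)) (t : RTree V E) : Prop :=
  ∃ p ∈ B, Prov.edges p = t.edges ∧ (t.edges = ∅ → p.root = t.root)

/-- The run finds the rooted tree `(T, r)`: some built provenance has exactly
this edge set and this root. -/
def FindsRooted [DecidableEq E] (B : Set (Prov V E)) (T : Finset E) (r : V) : Prop :=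
  ∃ p ∈ B, Prov.edges p = T ∧ p.root = r

end CTP

open CTP

/-- The graph with nodes `A=0, 1=1, x=2, 2=3, B=4, 3=5, C=6` and edges
`A–1, 1–x, x–2, 2–B, x–3, 3–C`. -/
def g18 : Multigraph (Fin 7) (Fin 6) :=
  ⟨![s(0, 1), s(1, 2), s(2, 3), s(3, 4), s(2, 5), s(5, 6)]⟩

/-- Seed sets `S₁={A}, S₂={B}, S₃={C}`. -/
def s18 : Fin 3 → Set (Fin 7) := ![{0}, {4}, {6}]

/-! ### Cuts and the unique result -/

/-- An edge set with nodes on both sides of a cut `X` that none of its edges crosses is not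
connected. -/
lemma not_connected_of_cut (T : Finset (Fin 6)) (X : Finset (Fin 7)) (x y : Fin 7)
    (hxT : x ∈ nodeSet g18 T) (hyT : y ∈ nodeSet g18 T) (hx : x ∈ X) (hy : y ∉ X)
    (hcut : ∀ e ∈ T, ∀ a b, g18.ends e = s(a, b) → a ∈ X → b ∈ X) :
    ¬ connectedEdges g18 T := by
  intro h
  have key : ∀ z, Relation.ReflTransGen (fun a b => ∃ e ∈ T, g18.ends e = s(a, b)) x z →
      z ∈ X := by
    intro z hz
    induction hz with
    | refl => exact hx
    | tail _ hstep ih =>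
      obtain ⟨e, he, hab⟩ := hstep
      exact hcut e he _ _ hab ih
  exact hy (key y (h x hxT y hyT))

instance (v : Fin 7) (e : Fin 6) : Decidable (v ∈ g18.ends e) := Sym2.Mem.decidable v _

lemma cut_edge (f : Fin 6) (X : Finset (Fin 7))
    (h : ∀ e, e ≠ f → ∀ a b, g18.ends e = s(a, b) → a ∈ X → b ∈ X)
    (T : Finset (Fin 6)) (x y : Fin 7)
    (hxT : x ∈ nodeSet g18 T) (hyT : y ∈ nodeSet g18 T) (hx : x ∈ X) (hy : y ∉ X)
    (hf : f ∉ T) : ¬ connectedEdges g18 T :=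
  not_connected_of_cut T X x y hxT hyT hx hy
    fun e he => h e (fun hef => hf (hef ▸ he))

/-- A connected edge set covering the three seeds contains the inner edge of each arm. -/
lemma inner_mem (T : Finset (Fin 6)) (h0 : (0 : Fin 7) ∈ nodeSet g18 T)
    (h4 : (4 : Fin 7) ∈ nodeSet g18 T) (h6 : (6 : Fin 7) ∈ nodeSet g18 T)
    (hc : connectedEdges g18 T) : 1 ∈ T ∧ 2 ∈ T ∧ 4 ∈ T := by
  refine ⟨?_, ?_, ?_⟩ <;> by_contra hf
  · exact cut_edge 1 {0, 1} (by decide +kernel) T 0 4 h0 h4 (by decide) (by decide) hf hc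
  · exact cut_edge 2 {3, 4} (by decide +kernel) T 4 0 h4 h0 (by decide) (by decide) hf hc
  · exact cut_edge 4 {5, 6} (by decide +kernel) T 6 0 h6 h0 (by decide) (by decide) hf hc

lemma outer_mem (T : Finset (Fin 6)) :
    ((0 : Fin 7) ∈ nodeSet g18 T ↔ 0 ∈ T) ∧ ((4 : Fin 7) ∈ nodeSet g18 T ↔ 3 ∈ T) ∧
      ((6 : Fin 7) ∈ nodeSet g18 T ↔ 5 ∈ T) := by
  have a0 : ∀ e : Fin 6, (0 : Fin 7) ∈ g18.ends e ↔ e = 0 := by decide +kernel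
  have a4 : ∀ e : Fin 6, (4 : Fin 7) ∈ g18.ends e ↔ e = 3 := by decide +kernel
  have a6 : ∀ e : Fin 6, (6 : Fin 7) ∈ g18.ends e ↔ e = 5 := by decide +kernel
  simp [nodeSet, a0, a4, a6]

lemma eq_univ_of_seeds (T : Finset (Fin 6)) (h0 : (0 : Fin 7) ∈ nodeSet g18 T)
    (h4 : (4 : Fin 7) ∈ nodeSet g18 T) (h6 : (6 : Fin 7) ∈ nodeSet g18 T)
    (hc : connectedEdges g18 T) : T = Finset.univ := by
  obtain ⟨h1, h2, h3⟩ := inner_mem T h0 h4 h6 hc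
  have k0 := (outer_mem T).1.1 h0
  have k4 := (outer_mem T).2.1.1 h4
  have k6 := (outer_mem T).2.2.1 h6
  ext e
  fin_cases e <;> simp_all

lemma nodeSet_univ18 : nodeSet g18 Finset.univ = Set.univ := by
  have : ∀ v : Fin 7, ∃ e : Fin 6, v ∈ g18.ends e := by decide +kernel
  ext v
  simpa [nodeSet] using this v

lemma connected_univ18 : connectedEdges g18 Finset.univ := by
  set r : Fin 7 → Fin 7 → Prop := fun a b => ∃ e ∈ Finset.univ, g18.ends e = s(a, b) with hr
  have hsymm : ∀ a b, Relation.ReflTransGen r a b → Relation.ReflTransGen r b a := by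
    intro a b hab
    have hs : Std.Symm r := ⟨fun a b ⟨e, he, h⟩ => ⟨e, he, h.trans Sym2.eq_swap⟩⟩
    exact (Relation.ReflTransGen.stdSymm (r := r)).symm _ _ hab
  have s1 : r 2 1 := ⟨1, Finset.mem_univ _, by decide +kernel⟩
  have s0 : r 1 0 := ⟨0, Finset.mem_univ _, by decide +kernel⟩
  have s3 : r 2 3 := ⟨2, Finset.mem_univ _, by decide +kernel⟩
  have s4 : r 3 4 := ⟨3, Finset.mem_univ _, by decide +kernel⟩
  have s5 : r 2 5 := ⟨4, Finset.mem_univ _, by decide +kernel⟩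
  have s6 : r 5 6 := ⟨5, Finset.mem_univ _, by decide +kernel⟩
  have hreach : ∀ v, Relation.ReflTransGen r 2 v := by
    intro v
    fin_cases v
    · exact (Relation.ReflTransGen.single s1).tail s0
    · exact .single s1
    · exact .refl
    · exact .single s3
    · exact (Relation.ReflTransGen.single s3).tail s4
    · exact .single s5
    · exact (Relation.ReflTransGen.single s5).tail s6
  intro x _ y _
  exact (hsymm _ _ (hreach x)).trans (hreach y)

lemma isTree_univ18 : IsTreeEdges g18 Finset.univ := by
  refine ⟨connected_univ18, fun _ => ?_⟩
  rw [nodeSet_univ18, Set.ncard_univ]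
  simp

lemma deg_univ18 (v : Fin 7) :
    deg g18 v Finset.univ = (Finset.univ.filter fun e => v ∈ g18.ends e).card := by
  rw [deg, ← Set.ncard_coe_finset]
  congr 1
  ext e
  simp

instance (i : Fin 3) (v : Fin 7) : Decidable (v ∈ s18 i) :=
  decidable_of_iff (v = ![0, 4, 6] i) (by fin_cases i <;> simp [s18])

lemma isLeaf_univ18 (v : Fin 7) : IsLeaf g18 Finset.univ v ↔ isSeed s18 v := by
  rw [IsLeaf, deg_univ18, isSeed]
  revert v
  decide +kernel

lemma pSimple_univ18 : pSimple g18 s18 Finset.univ 3 := by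
  refine ⟨⟨isTree_univ18, fun v _ => isLeaf_univ18 v⟩, ?_⟩
  have hseeds : ∀ v : Fin 7, (∃ i, v ∈ s18 i) ↔ v ∈ ({0, 4, 6} : Finset (Fin 7)) := by
    decide +kernel
  have : {v ∈ nodeSet g18 Finset.univ | IsLeaf g18 Finset.univ v}
      = (({0, 4, 6} : Finset (Fin 7)) : Set (Fin 7)) := by
    ext v
    rw [Finset.mem_coe, ← hseeds v]
    simp only [nodeSet_univ18, Set.mem_univ, true_and, Set.mem_ofPred_eq, isLeaf_univ18, isSeed]
  rw [leafCount, this, Set.ncard_coe_finset]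
  decide

lemma isCTPResult_univ18 : IsCTPResult g18 s18 ⟨Finset.univ, 0⟩ := by
  have hnodes : ∀ v, v ∈ RTree.nodes g18 (⟨Finset.univ, 0⟩ : RTree (Fin 7) (Fin 6)) :=
    fun v => Or.inr (by simp [nodeSet_univ18])
  refine ⟨⟨isTree_univ18, fun _ => by simp [nodeSet_univ18]⟩, ?_, ?_⟩
  · intro i
    refine ⟨![0, 4, 6] i, ⟨hnodes _, ?_⟩, ?_⟩
    · fin_cases i <;> simp [s18]
    · rintro v ⟨_, hv⟩
      fin_cases i <;> simpa [s18] using hv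
  · intro e _
    by_contra hcon
    push Not at hcon
    obtain ⟨hc, hs⟩ := hcon
    have := eq_univ_of_seeds (Finset.univ.erase e)
      (hs 0 0 (by simp [s18]) (hnodes _)) (hs 1 4 (by simp [s18]) (hnodes _))
      (hs 2 6 (by simp [s18]) (hnodes _)) hc
    exact Finset.notMem_erase e Finset.univ (by rw [this]; exact Finset.mem_univ e)

lemma result_unique18 (r : RTree (Fin 7) (Fin 6)) (hr : IsCTPResult g18 s18 r) :
    r.edges = Finset.univ := by
  obtain ⟨⟨⟨hc, _⟩, _⟩, hseed, _⟩ := hr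
  have h0 : (0 : Fin 7) ∈ r.nodes g18 := by
    obtain ⟨v, ⟨hv, hvs⟩, _⟩ := hseed 0
    simp only [s18] at hvs
    exact (show v = 0 from hvs) ▸ hv
  have h4 : (4 : Fin 7) ∈ r.nodes g18 := by
    obtain ⟨v, ⟨hv, hvs⟩, _⟩ := hseed 1
    exact (show v = 4 from hvs) ▸ hv
  have h6 : (6 : Fin 7) ∈ r.nodes g18 := by
    obtain ⟨v, ⟨hv, hvs⟩, _⟩ := hseed 2
    exact (show v = 6 from hvs) ▸ hv
  rcases Finset.eq_empty_or_nonempty r.edges with he | hne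
  · -- A one-node tree cannot contain both `0` and `4`.
    have hn : ∀ v ∈ r.nodes g18, v = r.root := by
      rintro v (⟨_, hv⟩ | ⟨e, hmem, _⟩)
      · exact hv
      · simp [he] at hmem
    exact absurd ((hn 0 h0).trans (hn 4 h4).symm) (by decide)
  · have hn : ∀ v ∈ r.nodes g18, v ∈ nodeSet g18 r.edges := by
      rintro v (⟨h, _⟩ | hv)
      · exact absurd h hne.ne_empty
      · exact hv
    exact eq_univ_of_seeds _ (hn 0 h0) (hn 4 h4) (hn 6 h6) hc

/-! ### Deciding validity of provenances -/

/-- The node set of a provenance, as a `Finset`. -/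
def nodesF : Prov (Fin 7) (Fin 6) → Finset (Fin 7)
  | .init x => {x}
  | .grow t _ x => insert x (nodesF t)
  | .merge t₁ t₂ => nodesF t₁ ∪ nodesF t₂
  | .mo t _ => nodesF t

lemma mem_nodes_iff (t : Prov (Fin 7) (Fin 6)) (v : Fin 7) :
    v ∈ t.nodes g18 ↔ v ∈ nodesF t := by
  induction t <;> simp_all [Prov.nodes, nodesF]

/-- The indices of the seed sets represented in a provenance, as a `Finset`. -/
def satF (t : Prov (Fin 7) (Fin 6)) : Finset (Fin 3) :=
  Finset.univ.filter fun i => ![0, 4, 6] i ∈ nodesF t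

lemma satP_eq (t : Prov (Fin 7) (Fin 6)) : satP g18 s18 t = (satF t : Set (Fin 3)) := by
  ext i
  simp only [satP, satF, mem_nodes_iff, Set.mem_ofPred_eq, Finset.coe_filter, Finset.mem_univ,
    true_and]
  fin_cases i <;> simp [s18]

/-- Boolean version of `Prov.hasMo`. -/
def hasMoB : Prov (Fin 7) (Fin 6) → Bool
  | .init _ => false
  | .grow t _ _ => hasMoB t
  | .merge t₁ t₂ => hasMoB t₁ || hasMoB t₂
  | .mo _ _ => true

lemma hasMoB_iff (t : Prov (Fin 7) (Fin 6)) : hasMoB t = true ↔ t.hasMo := by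
  induction t <;> simp_all [Prov.hasMo, hasMoB]

/-- Boolean version of `SeedGain`. -/
def gainB : Prov (Fin 7) (Fin 6) → Bool
  | .init _ => false
  | .grow t e x => decide ((satF t).card < (satF (.grow t e x)).card)
  | .merge t₁ t₂ => decide ((satF t₁).card < (satF (.merge t₁ t₂)).card ∧
      (satF t₂).card < (satF (.merge t₁ t₂)).card)
  | .mo _ _ => false

lemma gainB_iff (t : Prov (Fin 7) (Fin 6)) : gainB t = true ↔ SeedGain g18 s18 t := by
  cases t <;> simp [SeedGain, gainB, satP_eq, Set.ncard_coe_finset]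

/-- Decision procedure for `ValidProv g18 s18`. -/
def validB : Prov (Fin 7) (Fin 6) → Bool
  | .init x => decide (∃ i, x ∈ s18 i)
  | .grow t e x => decide (g18.ends e = s(t.root, x)) && decide (x ∉ nodesF t) &&
      decide (¬ ∃ i ∈ satF t, x ∈ s18 i) && decide (¬ ∀ i, i ∈ satF t) && !hasMoB t && validB t
  | .merge t₁ t₂ => decide (t₁.root = t₂.root) && decide (nodesF t₁ ∩ nodesF t₂ ⊆ {t₁.root}) &&
      decide (satF t₁ ∩ satF t₂ = ∅) && validB t₁ && validB t₂
  | .mo t r => decide (r ∈ nodesF t) && decide (∃ i, r ∈ s18 i) && decide (r ≠ t.root) &&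
      gainB t && validB t

lemma validB_iff (t : Prov (Fin 7) (Fin 6)) : validB t = true ↔ ValidProv g18 s18 t := by
  induction t with
  | init x =>
    simp only [validB, decide_eq_true_eq]
    constructor
    · rintro ⟨i, hi⟩
      exact .init hi
    · rintro ⟨hi⟩
      exact ⟨_, hi⟩
  | grow t e x ih =>
    simp only [validB, Bool.and_eq_true, decide_eq_true_eq, Bool.not_eq_true',
      ← Bool.not_eq_true, hasMoB_iff, ih]
    constructor
    · rintro ⟨⟨⟨⟨⟨h1, h2⟩, h3⟩, h4⟩, h5⟩, h6⟩
      exact .grow h6 h1 (by rwa [mem_nodes_iff]) (by simpa only [satP_eq, Finset.mem_coe] using h3)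
        (by simpa only [satP_eq, Finset.mem_coe] using h4) h5
    · intro h
      cases h with
      | grow h6 h1 h2 h3 h4 h5 =>
        exact ⟨⟨⟨⟨⟨h1, by rwa [mem_nodes_iff] at h2⟩,
          by simpa only [satP_eq, Finset.mem_coe] using h3⟩,
          by simpa only [satP_eq, Finset.mem_coe] using h4⟩, h5⟩, h6⟩
  | merge t₁ t₂ ih₁ ih₂ =>
    have hN : (t₁.nodes g18 ∩ t₂.nodes g18 ⊆ {t₁.root}) ↔
        nodesF t₁ ∩ nodesF t₂ ⊆ {t₁.root} := by
      simp [Set.subset_def, Finset.subset_iff, mem_nodes_iff]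
    have hS : satP g18 s18 t₁ ∩ satP g18 s18 t₂ = ∅ ↔ satF t₁ ∩ satF t₂ = ∅ := by
      rw [satP_eq, satP_eq, ← Finset.coe_inter, Finset.coe_eq_empty]
    simp only [validB, Bool.and_eq_true, decide_eq_true_eq, ih₁, ih₂, ← hN, ← hS]
    constructor
    · rintro ⟨⟨⟨⟨h1, h2⟩, h3⟩, h4⟩, h5⟩
      exact .merge h4 h5 h1 h2 h3
    · intro h
      cases h with
      | merge h4 h5 h1 h2 h3 => exact ⟨⟨⟨⟨h1, h2⟩, h3⟩, h4⟩, h5⟩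
  | mo t r ih =>
    simp only [validB, Bool.and_eq_true, decide_eq_true_eq, ih, gainB_iff, ← mem_nodes_iff]
    constructor
    · rintro ⟨⟨⟨⟨h1, h2⟩, h3⟩, h4⟩, h5⟩
      exact .mo h5 h1 h2 h3 h4
    · intro h
      cases h with
      | mo h5 h1 h2 h3 h4 => exact ⟨⟨⟨⟨h1, h2⟩, h3⟩, h4⟩, h5⟩

/-! ### The incomplete run -/

/-- The path from `A` to the centre. -/
def armA : Prov (Fin 7) (Fin 6) := .grow (.grow (.init 0) 0 1) 1 2

/-- The path from `B` to the centre. -/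
def armB : Prov (Fin 7) (Fin 6) := .grow (.grow (.init 4) 3 3) 2 2

/-- The path from `C` to the centre. -/
def armC : Prov (Fin 7) (Fin 6) := .grow (.grow (.init 6) 5 5) 4 2

/-- The path `A–B`, merged at node `3` of the arm of `B`. -/
def pathAB : Prov (Fin 7) (Fin 6) := .merge (.grow armA 2 3) (.grow (.init 4) 3 3)

/-- The path `A–C`, merged at node `5` of the arm of `C`. -/
def pathAC : Prov (Fin 7) (Fin 6) := .merge (.grow armA 4 5) (.grow (.init 6) 5 5)

/-- The path `B–C`, merged at node `5` of the arm of `C`. -/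
def pathBC : Prov (Fin 7) (Fin 6) := .merge (.grow armB 4 5) (.grow (.init 6) 5 5)

/-- The `i`-th provenance built in the incomplete run. -/
def provAt : Fin 24 → Prov (Fin 7) (Fin 6) :=
  ![.init 0, .init 4, .init 6,
    .grow (.init 0) 0 1, .grow (.init 4) 3 3, .grow (.init 6) 5 5,
    armA, .grow armA 2 3, pathAB, .mo pathAB 0, .mo pathAB 4,
    .grow armA 4 5, pathAC, .mo pathAC 0, .mo pathAC 6,
    armB, .grow armB 1 1, .grow armB 4 5, pathBC, .mo pathBC 4, .mo pathBC 6,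
    armC, .grow armC 1 1, .grow armC 2 3]

/-- The trees of the run differ as rooted trees. -/
lemma provAt_injective : Function.Injective provAt := by
  have h : ∀ i j, Prov.edges (provAt i) = Prov.edges (provAt j) →
      (provAt i).root = (provAt j).root → i = j := by decide +kernel
  intro i j hij
  exact h i j (by rw [hij]) (by rw [hij])

/-- The position of a provenance in the run; the value off the run is irrelevant. -/
noncomputable def timeOf (t : Prov (Fin 7) (Fin 6)) : ℕ :=
  (Function.invFun provAt t : Fin 24)

lemma timeOf_provAt (i : Fin 24) : timeOf (provAt i) = i := by
  rw [timeOf, Function.leftInverse_invFun provAt_injective]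

lemma provAt_children (i : Fin 24) :
    ∀ c ∈ (provAt i).children, ∃ j < i, provAt j = c := by
  -- For each `i`, the positions of the children of `provAt i`.
  have h : (provAt i).children =
      ((![[], [], [], [0], [1], [2], [3], [6], [7, 4], [8], [8], [6], [11, 5], [12], [12],
        [4], [15], [15], [17, 5], [18], [18], [5], [21], [21]] :
          Fin 24 → List (Fin 24)) i).map provAt := by
    fin_cases i <;> rfl
  have hlt : ∀ i : Fin 24, ∀ j ∈
      (![[], [], [], [0], [1], [2], [3], [6], [7, 4], [8], [8], [6], [11, 5], [12], [12],
        [4], [15], [15], [17, 5], [18], [18], [5], [21], [21]] :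
          Fin 24 → List (Fin 24)) i, j < i := by decide +kernel
  intro c hc
  rw [h, List.mem_map] at hc
  obtain ⟨j, hj, rfl⟩ := hc
  exact ⟨j, hlt i j hj, rfl⟩

lemma isMoTop_provAt (i : Fin 24) :
    ¬ (provAt i).isMoTop → i ∉ ({9, 10, 13, 14, 19, 20} : Finset (Fin 24)) := by
  intro h hi
  fin_cases hi <;> exact h trivial

lemma provAt_dedup : ∀ i j : Fin 24, i ∉ ({9, 10, 13, 14, 19, 20} : Finset (Fin 24)) →
    j ∉ ({9, 10, 13, 14, 19, 20} : Finset (Fin 24)) →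
    Prov.edges (provAt i) = Prov.edges (provAt j) →
    (Prov.edges (provAt i)).Nonempty → i = j := by decide +kernel

lemma provAt_grow : ∀ (i : Fin 24) (e : Fin 6) (x : Fin 7),
    validB (.grow (provAt i) e x) = true →
    ∃ j, Prov.edges (provAt j) = insert e (Prov.edges (provAt i)) := by decide +kernel

lemma provAt_merge : ∀ i j : Fin 24, validB (.merge (provAt i) (provAt j)) = true →
    ∃ k, Prov.edges (provAt k) = Prov.edges (provAt i) ∪ Prov.edges (provAt j) := by
  decide +kernel

/-- Only the three seed-to-seed paths are re-rooted, each at its two end seeds. -/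
lemma provAt_mo (i : Fin 24) (r : Fin 7) (h : validB (.mo (provAt i) r) = true) :
    ∃ j, provAt j = .mo (provAt i) r := by
  have key : ∀ (i : Fin 24) (r : Fin 7), validB (.mo (provAt i) r) = true →
      (i = 8 ∧ (r = 0 ∨ r = 4)) ∨ (i = 12 ∧ (r = 0 ∨ r = 6)) ∨
        (i = 18 ∧ (r = 4 ∨ r = 6)) := by decide +kernel
  rcases key i r h with ⟨rfl, rfl | rfl⟩ | ⟨rfl, rfl | rfl⟩ | ⟨rfl, rfl | rfl⟩
  exacts [⟨9, rfl⟩, ⟨10, rfl⟩, ⟨13, rfl⟩, ⟨14, rfl⟩, ⟨19, rfl⟩, ⟨20, rfl⟩]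

/-- The MoESP execution that misses the result. -/
noncomputable def run18 : MoESPRun g18 s18 where
  built := Set.range provAt
  time := timeOf
  hvalid := by
    have h : ∀ i, validB (provAt i) = true := by decide +kernel
    rintro _ ⟨i, rfl⟩
    exact (validB_iff _).1 (h i)
  hchild := by
    rintro _ ⟨i, rfl⟩ c hc
    obtain ⟨j, hj, rfl⟩ := provAt_children i c hc
    refine ⟨⟨j, rfl⟩, ?_⟩
    rw [timeOf_provAt, timeOf_provAt]
    exact hj
  htime := by
    rintro _ ⟨i, rfl⟩ _ ⟨j, rfl⟩ h
    rw [timeOf_provAt, timeOf_provAt] at h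
    rw [Fin.ext h]
  hinit := by
    have h : ∀ x : Fin 7, (∃ i, x ∈ s18 i) → x = 0 ∨ x = 4 ∨ x = 6 := by decide +kernel
    intro x hx
    rcases h x hx with rfl | rfl | rfl
    exacts [⟨0, rfl⟩, ⟨1, rfl⟩, ⟨2, rfl⟩]
  hdedup := by
    rintro _ ⟨i, rfl⟩ _ ⟨j, rfl⟩ hi hj he hne
    rw [provAt_dedup i j (isMoTop_provAt i hi) (isMoTop_provAt j hj) he hne]
  hgrow := by
    rintro _ ⟨i, rfl⟩ e x h
    obtain ⟨j, hj⟩ := provAt_grow i e x ((validB_iff _).2 h)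
    exact ⟨_, ⟨j, rfl⟩, hj⟩
  hmerge := by
    rintro _ ⟨i, rfl⟩ _ ⟨j, rfl⟩ h
    obtain ⟨k, hk⟩ := provAt_merge i j ((validB_iff _).2 h)
    exact ⟨_, ⟨k, rfl⟩, hk⟩
  hmo := by
    rintro _ ⟨i, rfl⟩ r h
    exact provAt_mo i r ((validB_iff _).2 h)

/-- MoESP is incomplete for 3 seed sets on
non-2-piecewise-simple results: on the graph `A–1, 1–x, x–2, 2–B, x–3, 3–C`
with seeds `{A},{B},{C}`, the only CTP result is the 3-simple tree of all six
edges, and there exists a MoESP execution under which this result is not found. -/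
theorem moesp_incomplete_three_seed_sets :
    IsCTPResult g18 s18 ⟨Finset.univ, 0⟩ ∧
    pSimple g18 s18 Finset.univ 3 ∧
    (∀ r : RTree (Fin 7) (Fin 6), IsCTPResult g18 s18 r → r.edges = Finset.univ) ∧
    ∃ R : MoESPRun g18 s18, ∀ p ∈ R.built, Prov.edges p ≠ Finset.univ := by
  refine ⟨isCTPResult_univ18, pSimple_univ18, result_unique18, run18, ?_⟩
  have h : ∀ i, Prov.edges (provAt i) ≠ Finset.univ := by decide +kernel
  rintro _ ⟨i, rfl⟩
  exact h i
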